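/- Let G be a finite group such that every conjugacy class K of G satisfies that K² is a union of conjugacy classes all of which are central except at most one; that is, for every x ∈ G there exists d ∈ G with (x^G)² ⊆ Z(G) ∪ d^G. Then there exist normal subgroups N ≤ M of G such that N is nilpotent, the quotient M/N is a 2-group, and the quotient G/M is nilpotent; in particular G is solvable. -/

import Mathlib

open Pointwise

/-- The conjugacy class of `x` in `G`. -/
def conjClass {G : Type*} [Group G] (x : G) : Set G :=
  {a : G | ∃ g : G, a = g⁻¹ * x * g}

universe u

/-- Elementwise form of the hypothesis. -/
def SqHyp (G : Type*) [Group G] : Prop :=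
  ∀ x a b c d : G, IsConj x a → IsConj x b → IsConj x c → IsConj x d →
    a * b ∈ Subgroup.center G ∨ c * d ∈ Subgroup.center G ∨ IsConj (a * b) (c * d)

/-- No nontrivial real elements of odd order. -/
def NoReal (G : Type*) [Group G] : Prop :=
  ∀ y g : G, Odd (orderOf y) → g * y * g⁻¹ = y⁻¹ → y = 1

section fitting
variable {G : Type*} [Group G]

lemma comm_le_iff (X Y V : Subgroup G) [V.Normal] :
    ⁅X, Y⁆ ≤ V ↔ X ≤ (Subgroup.centralizer
      ((Y.map (QuotientGroup.mk' V) : Subgroup (G ⧸ V)) : Set (G ⧸ V))).comap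
        (QuotientGroup.mk' V) := by
  rw [← Subgroup.map_le_iff_le_comap, ← Subgroup.commutator_eq_bot_iff_le_centralizer,
    ← Subgroup.map_commutator, Subgroup.map_eq_bot_iff, QuotientGroup.ker_mk']

lemma comm_sup_left {X X' Y V : Subgroup G} [V.Normal] (h : ⁅X, Y⁆ ≤ V) (h' : ⁅X', Y⁆ ≤ V) :
    ⁅X ⊔ X', Y⁆ ≤ V := by
  rw [comm_le_iff] at *
  exact sup_le h h'

lemma comm_iSup_left {ι : Sort*} {X : ι → Subgroup G} {Y V : Subgroup G} [V.Normal]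
    (h : ∀ i, ⁅X i, Y⁆ ≤ V) :
    ⁅⨆ i, X i, Y⁆ ≤ V := by
  simp_rw [comm_le_iff] at *
  exact iSup_le h

/-- shifted lower central series, starting with the whole group -/
def lcsShift (M : Subgroup G) : ℕ → Subgroup G
  | 0 => ⊤
  | n + 1 => M.lowerCentralSeries n

instance lcsShift_normal (M : Subgroup G) [M.Normal] (n : ℕ) : (lcsShift M n).Normal := by
  cases n <;> simp only [lcsShift] <;> infer_instance

lemma lcsShift_comm (M : Subgroup G) [M.Normal] (n : ℕ) : ⁅lcsShift M n, M⁆ ≤ lcsShift M (n+1) := by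
  cases n with
  | zero => exact Subgroup.commutator_le_right _ _
  | succ n => exact le_rfl

lemma lcsShift_anti (M : Subgroup G) [M.Normal] : Antitone (lcsShift M) :=
  antitone_nat_of_succ_le fun n => by
    cases n with
    | zero => exact le_top
    | succ n => exact Subgroup.lowerCentralSeries_antitone M (Nat.le_succ n)

lemma fitting_aux (M N : Subgroup G) [M.Normal] [N.Normal] (n : ℕ) :
    (M ⊔ N).lowerCentralSeries n ≤
      ⨆ p : {p : ℕ × ℕ // p.1 + p.2 = n + 1}, lcsShift M p.1.1 ⊓ lcsShift N p.1.2 := by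
  induction n with
  | zero =>
    refine sup_le ?_ ?_
    · exact le_iSup_of_le ⟨(1, 0), rfl⟩ (le_inf le_rfl le_top)
    · exact le_iSup_of_le ⟨(0, 1), rfl⟩ (le_inf le_top le_rfl)
  | succ n ih =>
    rw [Subgroup.lowerCentralSeries_succ]
    refine (Subgroup.commutator_mono ih le_rfl).trans ?_
    have hn : (⨆ p : {p : ℕ × ℕ // p.1 + p.2 = n + 1 + 1},
        lcsShift M p.1.1 ⊓ lcsShift N p.1.2).Normal := inferInstance
    refine comm_iSup_left ?_
    rintro ⟨⟨i, j⟩, hij⟩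
    simp only at hij
    rw [Subgroup.commutator_comm]
    refine comm_sup_left ?_ ?_
    · rw [Subgroup.commutator_comm]
      refine le_iSup_of_le ⟨(i + 1, j), by simp only; omega⟩ (le_inf ?_ ?_)
      · exact (Subgroup.commutator_mono inf_le_left le_rfl).trans (lcsShift_comm M i)
      · exact (Subgroup.commutator_le_left _ _).trans inf_le_right
    · rw [Subgroup.commutator_comm]
      refine le_iSup_of_le ⟨(i, j + 1), by simp only; omega⟩ (le_inf ?_ ?_)
      · exact (Subgroup.commutator_le_left _ _).trans inf_le_left
      · exact (Subgroup.commutator_mono inf_le_right le_rfl).trans (lcsShift_comm N j)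

lemma fitting (M N : Subgroup G) [M.Normal] [N.Normal] (hM : Group.IsNilpotent M)
    (hN : Group.IsNilpotent N) : Group.IsNilpotent (M ⊔ N : Subgroup G) := by
  obtain ⟨c, hc⟩ := (Subgroup.isNilpotent_iff_lowerCentralSeries M).1 hM
  obtain ⟨d, hd⟩ := (Subgroup.isNilpotent_iff_lowerCentralSeries N).1 hN
  refine Subgroup.isNilpotent_of_lowerCentralSeries_eq_bot (n := c + d + 2) ?_
  rw [eq_bot_iff]
  refine (fitting_aux M N _).trans (iSup_le ?_)
  rintro ⟨⟨i, j⟩, hij⟩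
  simp only at hij ⊢
  rcases le_or_gt (c + 1) i with h | h
  · exact inf_le_left.trans ((lcsShift_anti M h).trans hc.le)
  · exact inf_le_right.trans ((lcsShift_anti N (show d + 1 ≤ j by omega)).trans hd.le)

lemma exists_fitting (G : Type*) [Group G] [Finite G] : ∃ F : Subgroup G, F.Normal ∧ Group.IsNilpotent F ∧
    ∀ N : Subgroup G, N.Normal → Group.IsNilpotent N → N ≤ F := by
  obtain ⟨F, hF⟩ := Set.Finite.exists_maximal
    (Set.toFinite {N : Subgroup G | N.Normal ∧ Group.IsNilpotent N})
    ⟨⊥, inferInstance, inferInstance⟩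
  obtain ⟨⟨h1, h2⟩, h3⟩ := hF
  refine ⟨F, h1, h2, fun N hN hN' => ?_⟩
  exact le_sup_right.trans (h3 (y := F ⊔ N) ⟨inferInstance, fitting F N h2 hN'⟩ le_sup_left)

end fitting

section basics
variable {G : Type*} [Group G]

lemma odd_pow {y : G} (hy : Odd (orderOf y)) : ∃ m : ℕ, (y ^ 2) ^ m = y := by
  obtain ⟨k, hk⟩ := hy
  refine ⟨k + 1, ?_⟩
  rw [← pow_mul, show 2 * (k + 1) = orderOf y + 1 by omega, pow_succ, pow_orderOf_eq_one, one_mul]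

lemma odd_mem {y : G} (hy : Odd (orderOf y)) {S : Subgroup G} (h : y ^ 2 ∈ S) : y ∈ S := by
  obtain ⟨m, hm⟩ := odd_pow hy
  rw [← hm]; exact S.pow_mem h m

lemma odd_eq_one {y : G} (hy : Odd (orderOf y)) (h : y ^ 2 = 1) : y = 1 := by
  obtain ⟨m, hm⟩ := odd_pow hy
  rw [← hm, h, one_pow]

lemma center_conj {x y : G} (h : IsConj x y) (hx : x ∈ Subgroup.center G) : y ∈ Subgroup.center G := by
  obtain ⟨g, rfl⟩ := isConj_iff.1 h
  exact Subgroup.Normal.conj_mem inferInstance _ hx _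

lemma odd_conj {x y : G} (h : IsConj x y) (hx : Odd (orderOf x)) : Odd (orderOf y) := by
  obtain ⟨g, rfl⟩ := isConj_iff.1 h
  have := MulEquiv.orderOf_eq (MulAut.conj g) x
  rw [MulAut.conj_apply] at this
  rwa [this]

lemma isConj_pow {x y : G} (h : IsConj x y) (n : ℕ) : IsConj (x ^ n) (y ^ n) := by
  obtain ⟨g, rfl⟩ := isConj_iff.1 h
  exact isConj_iff.2 ⟨g, by rw [conj_pow]⟩

lemma isConj_inv' {x y : G} (h : IsConj x y) : IsConj (x⁻¹) (y⁻¹) := by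
  obtain ⟨g, rfl⟩ := isConj_iff.1 h
  exact isConj_iff.2 ⟨g, by group⟩

lemma isConj_conj (x g : G) : IsConj x (g * x * g⁻¹) := isConj_iff.2 ⟨g, rfl⟩

lemma SqHyp.map {H : Type*} [Group H] (hG : SqHyp G) (f : G →* H) (hf : Function.Surjective f) :
    SqHyp H := by
  have lift : ∀ (x : G) (a : H), IsConj (f x) a → ∃ a', IsConj x a' ∧ f a' = a := by
    intro x a h
    obtain ⟨g, rfl⟩ := isConj_iff.1 h
    obtain ⟨g, rfl⟩ := hf g
    exact ⟨g * x * g⁻¹, isConj_conj _ _, by simp⟩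
  have hc : ∀ x : G, x ∈ Subgroup.center G → f x ∈ Subgroup.center H := by
    intro x hx
    rw [Subgroup.mem_center_iff] at *
    intro g
    obtain ⟨g, rfl⟩ := hf g
    rw [← map_mul, ← map_mul, hx]
  intro x a b c d ha hb hc' hd
  obtain ⟨x, rfl⟩ := hf x
  obtain ⟨a, hax, rfl⟩ := lift x a ha
  obtain ⟨b, hbx, rfl⟩ := lift x b hb
  obtain ⟨c, hcx, rfl⟩ := lift x c hc'
  obtain ⟨d, hdx, rfl⟩ := lift x d hd
  rw [← map_mul, ← map_mul]
  rcases hG x a b c d hax hbx hcx hdx with h | h | h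
  · exact .inl (hc _ h)
  · exact .inr (.inl (hc _ h))
  · exact .inr (.inr (f.map_isConj h))

/-- If `y * (g y g⁻¹)` is central then `y² z⁻¹` is real of odd order. -/
lemma real_of_central {y g : G} (hy : Odd (orderOf y))
    (hz : y * (g * y * g⁻¹) ∈ Subgroup.center G) :
    Odd (orderOf (y ^ 2 * (y * (g * y * g⁻¹))⁻¹)) ∧
      g * (y ^ 2 * (y * (g * y * g⁻¹))⁻¹) * g⁻¹ = (y ^ 2 * (y * (g * y * g⁻¹))⁻¹)⁻¹ := by
  set w := g * y * g⁻¹ with hw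
  have hwo : Odd (orderOf w) := odd_conj (isConj_conj y g) hy
  have hz' := Subgroup.mem_center_iff.1 hz
  have hcomm : Commute y w := by
    have := hz' y
    rw [mul_assoc y w y] at this
    exact mul_left_cancel this
  have e : y ^ 2 * (y * w)⁻¹ = y * w⁻¹ := by
    rw [hcomm.eq]; group
  have e2 : g * w * g⁻¹ = y := by
    have := hz' g
    have h3 : g * (y * w) * g⁻¹ = y * w := by rw [this]; group
    have h4 : g * (y * w) * g⁻¹ = w * (g * w * g⁻¹) := by rw [hw]; group
    rw [h4, hcomm.eq] at h3
    exact mul_left_cancel h3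
  rw [e]
  constructor
  · have := (hcomm.inv_right).orderOf_mul_dvd_mul_orderOf
    rw [orderOf_inv] at this
    exact (hy.mul hwo).of_dvd_nat this
  · calc g * (y * w⁻¹) * g⁻¹ = w * (g * w * g⁻¹)⁻¹ := by rw [hw]; group
      _ = _ := by rw [e2]; group

lemma NoReal.map [Finite G] {H : Type*} [Group H] (hG : SqHyp G) (f : G →* H) (hf : Function.Surjective f)
    (hr : ∀ y g : G, Odd (orderOf y) → g * y * g⁻¹ = y⁻¹ → f y = 1) : NoReal H := by
  intro y g hy hyg
  -- lift y to an element of odd order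
  obtain ⟨y', hy'o, rfl⟩ : ∃ y' : G, Odd (orderOf y') ∧ f y' = y := by
    obtain ⟨x, rfl⟩ := hf y
    obtain ⟨a, b, hb, hab⟩ := Nat.exists_eq_two_pow_mul_odd (orderOf_pos x).ne'
    have h1 : Odd (orderOf (x ^ 2 ^ a)) := by
      have : orderOf (x ^ 2 ^ a) ∣ b := by
        rw [orderOf_dvd_iff_pow_eq_one, ← pow_mul, ← hab, pow_orderOf_eq_one]
      exact hb.of_dvd_nat this
    have h2 : ∀ a : ℕ, f x ∈ Subgroup.zpowers (f x ^ 2 ^ a) := by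
      intro a
      induction a with
      | zero => simp
      | succ a ih =>
        have h3 : Odd (orderOf (f x ^ 2 ^ a)) := hy.of_dvd_nat (orderOf_pow_dvd _)
        have : f x ^ 2 ^ a ∈ Subgroup.zpowers (f x ^ 2 ^ (a + 1)) := by
          apply odd_mem h3
          rw [← pow_mul, ← pow_succ]
          exact Subgroup.mem_zpowers _
        exact (Subgroup.zpowers_le.2 this) ih
    obtain ⟨m, hm⟩ := Subgroup.mem_zpowers_iff.1 (h2 a)
    refine ⟨(x ^ 2 ^ a) ^ m, ?_, by simpa using hm⟩
    refine h1.of_dvd_nat ?_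
    exact orderOf_dvd_of_mem_zpowers (Subgroup.zpow_mem_zpowers _ _)
  obtain ⟨g, rfl⟩ := hf g
  have hfw : f (y' * (g * y' * g⁻¹)) = 1 := by
    simp [← mul_assoc] at hyg ⊢
    rw [mul_assoc, mul_assoc, ← mul_assoc (f g), hyg, mul_inv_cancel]
  apply odd_eq_one hy
  by_cases hz : y' * (g * y' * g⁻¹) ∈ Subgroup.center G
  · obtain ⟨h1, h2⟩ := real_of_central hy'o hz
    have := hr _ _ h1 h2
    rwa [map_mul, map_inv, hfw, inv_one, mul_one, map_pow] at this
  · rcases hG y' y' y' y' (g * y' * g⁻¹) (.refl _) (.refl _) (.refl _) (isConj_conj _ _) with h | h | h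
    · rw [← sq] at h
      have h1 := odd_mem hy'o h
      have h2 := Subgroup.mem_center_iff.1 h1 g
      rw [h2, mul_inv_cancel_right] at hfw
      rw [← map_pow, sq, hfw]
    · exact absurd h hz
    · have := f.map_isConj h
      rw [hfw] at this
      have := isConj_one_left.1 this
      rw [← map_pow, sq, this]

end basics

section main
variable {G : Type*} [Group G]

/-- Real elements of odd order lie in nilpotent normal subgroups. -/
lemma real_mem_nilpotent [Finite G] (hG : SqHyp G) {y g : G} (hy : Odd (orderOf y))
    (hyg : g * y * g⁻¹ = y⁻¹) : ∃ N : Subgroup G, N.Normal ∧ Group.IsNilpotent N ∧ y ∈ N := by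
  -- reduce to the quotient by the centre
  suffices h : ∃ N : Subgroup (G ⧸ Subgroup.center G), N.Normal ∧ Group.IsNilpotent N ∧
      (QuotientGroup.mk' (Subgroup.center G) y) ∈ N by
    obtain ⟨N, h1, h2, h3⟩ := h
    refine ⟨N.comap (QuotientGroup.mk' _), inferInstance, ?_, h3⟩
    let φ := (QuotientGroup.mk' (Subgroup.center G)).subgroupComap N
    refine Subgroup.isNilpotent_of_ker_le_center φ ?_
    rintro ⟨x, hx⟩ hxk
    have hxc : x ∈ Subgroup.center G := by
      have := congrArg Subtype.val (MonoidHom.mem_ker.1 hxk)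
      exact (QuotientGroup.eq_one_iff x).1 this
    rw [Subgroup.mem_center_iff]
    rintro ⟨b, hb⟩
    exact Subtype.ext (Subgroup.mem_center_iff.1 hxc b)
  set q := QuotientGroup.mk' (Subgroup.center G) with hq
  have hq1 : ∀ x, q x = 1 ↔ x ∈ Subgroup.center G := fun x => QuotientGroup.eq_one_iff x
  have hqs : Function.Surjective q := QuotientGroup.mk'_surjective _
  by_cases hyz : y ∈ Subgroup.center G
  · exact ⟨⊥, inferInstance, inferInstance, by simpa using (hq1 y).2 hyz⟩
  have hy2 : y ^ 2 ∉ Subgroup.center G := fun h => hyz (odd_mem hy h)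
  have hyo2 : Odd (orderOf (y ^ 2)) := hy.of_dvd_nat (orderOf_pow_dvd _)
  have hy4 : (y ^ 2) ^ 2 ∉ Subgroup.center G := fun h => hy2 (odd_mem hyo2 h)
  have hyinv : IsConj y y⁻¹ := isConj_iff.2 ⟨g, hyg⟩
  have hK : ∀ {a}, IsConj y a → IsConj y a⁻¹ := fun h => hyinv.trans (isConj_inv' h)
  -- products in K²
  have hKK : ∀ {a b}, IsConj y a → IsConj y b → a * b ∉ Subgroup.center G →
      IsConj (y ^ 2) (a * b) := by
    intro a b ha hb hab
    rcases hG y y y a b (.refl _) (.refl _) ha hb with h | h | h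
    · rw [← sq] at h; exact absurd h hy2
    · exact absurd h hab
    · rwa [← sq] at h
  by_cases hcase : ∃ a b, IsConj y a ∧ IsConj y b ∧ y⁻¹ * a ∉ Subgroup.center G ∧
      y⁻¹ * b ∉ Subgroup.center G ∧ a⁻¹ * b ∉ Subgroup.center G
  · obtain ⟨a, b, ha, hb, h1, h2, h3⟩ := hcase
    have d1 := hKK hyinv ha h1
    have d2 := hKK hyinv hb h2
    have d3 := hKK (hK ha) hb h3
    have d1' : IsConj (y ^ 2) (y⁻¹ * a)⁻¹ := by
      have := isConj_pow hyinv 2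
      rw [inv_pow] at this
      exact this.trans (isConj_inv' d1)
    have e : (y⁻¹ * a)⁻¹ * (y⁻¹ * b) = a⁻¹ * b := by group
    have h24 : IsConj ((y ^ 2) ^ 2) (y ^ 2) := by
      rcases hG (y ^ 2) (y ^ 2) (y ^ 2) _ _ (.refl _) (.refl _) d1' d2 with h | h | h
      · rw [← sq] at h; exact absurd h hy4
      · rw [e] at h; exact absurd h h3
      · rw [e, ← sq] at h; exact h.trans d3.symm
    have h12 : IsConj (y ^ 2) y := by
      obtain ⟨m, hm⟩ := odd_pow hy
      have := isConj_pow h24 m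
      rw [hm, ← pow_mul, mul_comm 2 m, pow_mul, hm] at this
      exact this
    have hKK' : ∀ {a b}, IsConj y a → IsConj y b → q (a * b) = 1 ∨ IsConj y (a * b) := by
      intro a b ha hb
      rw [hq1]
      by_cases h : a * b ∈ Subgroup.center G
      · exact .inl h
      · exact .inr (h12.symm.trans (hKK ha hb h))
    let N : Subgroup (G ⧸ Subgroup.center G) :=
      { carrier := {u | u = 1 ∨ ∃ a, IsConj y a ∧ q a = u}
        one_mem' := .inl rfl
        mul_mem' := by
          rintro u v (rfl | ⟨a, ha, rfl⟩) (rfl | ⟨b, hb, rfl⟩)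
          · exact .inl (one_mul 1)
          · exact .inr ⟨b, hb, (one_mul _).symm⟩
          · exact .inr ⟨a, ha, (mul_one _).symm⟩
          · rw [← map_mul]
            rcases hKK' ha hb with h | h
            · exact .inl h
            · exact .inr ⟨_, h, rfl⟩
        inv_mem' := by
          rintro u (rfl | ⟨a, ha, rfl⟩)
          · exact .inl inv_one
          · exact .inr ⟨a⁻¹, hK ha, map_inv _ _⟩ }
    have hN : ∀ u, u ∈ N ↔ (u = 1 ∨ ∃ a, IsConj y a ∧ q a = u) := fun u => Iff.rfl
    have hyN : q y ∈ N := (hN _).2 (.inr ⟨y, .refl _, rfl⟩)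
    refine ⟨N, ⟨?_⟩, ?_, hyN⟩
    · intro u hu v
      obtain ⟨v, rfl⟩ := hqs v
      rcases (hN u).1 hu with rfl | ⟨a, ha, rfl⟩
      · exact (hN _).2 (.inl (by group))
      · exact (hN _).2 (.inr ⟨v * a * v⁻¹, ha.trans (isConj_conj _ _), by simp⟩)
    · -- all non-identity elements have the same prime order
      have hqy : q y ≠ 1 := fun h => hyz ((hq1 _).1 h)
      have hord : orderOf (q y) ≠ 1 := fun h => hqy (orderOf_eq_one_iff.1 h)
      have hp : (orderOf (q y)).minFac.Prime := Nat.minFac_prime hord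
      set p := (orderOf (q y)).minFac with hpdef
      have : Fact p.Prime := ⟨hp⟩
      have hall : ∀ u ∈ N, u ≠ 1 → IsConj (q y) u := by
        intro u hu hu1
        rcases (hN u).1 hu with rfl | ⟨a, ha, rfl⟩
        · exact absurd rfl hu1
        · exact q.map_isConj ha
      have hyp : (q y) ^ p = 1 := by
        by_contra hne
        have h1 : IsConj (q y) ((q y) ^ p) := hall _ (N.pow_mem hyN p) hne
        obtain ⟨c, hc⟩ := isConj_iff.1 h1
        have h2 : orderOf (q y) = orderOf ((q y) ^ p) := by
          rw [← hc]
          have := MulEquiv.orderOf_eq (MulAut.conj c) (q y)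
          rw [MulAut.conj_apply] at this
          exact this.symm
        rw [orderOf_pow_of_dvd hp.ne_zero (Nat.minFac_dvd _)] at h2
        have := Nat.div_lt_self (orderOf_pos (q y)) hp.one_lt
        omega
      have hpg : IsPGroup p N := by
        rw [isPGroup_iff_pow_pow_eq_one]
        rintro ⟨u, hu⟩
        refine ⟨1, Subtype.ext ?_⟩
        simp only [pow_one, Subgroup.coe_pow, Subgroup.coe_one]
        by_cases hu1 : u = 1
        · rw [hu1, one_pow]
        · have := isConj_pow (hall u hu hu1) p
          rw [hyp] at this
          exact isConj_one_right.1 this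
      exact hpg.isNilpotent
  · push Not at hcase
    refine ⟨Subgroup.zpowers (q y), ⟨?_⟩, ?_, Subgroup.mem_zpowers _⟩
    · have key : ∀ c, c * q y * c⁻¹ ∈ Subgroup.zpowers (q y) := by
        intro c
        obtain ⟨c, rfl⟩ := hqs c
        have e : q c * q y * (q c)⁻¹ = q (c * y * c⁻¹) := by simp
        rw [e]
        set a := c * y * c⁻¹ with ha
        have hay : IsConj y a := isConj_conj _ _
        by_cases h1 : y⁻¹ * a ∈ Subgroup.center G
        · have := (hq1 _).2 h1
          rw [map_mul, map_inv, inv_mul_eq_one] at this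
          rw [← this]; exact Subgroup.mem_zpowers _
        · have h2 : y⁻¹ * y⁻¹ ∉ Subgroup.center G := by
            intro h
            apply hy2
            rw [← inv_mem_iff, sq, mul_inv_rev]
            exact h
          have := (hq1 _).2 (hcase a y⁻¹ hay hyinv h1 h2)
          rw [map_mul, map_inv, inv_mul_eq_one] at this
          rw [this, map_inv]
          exact inv_mem (Subgroup.mem_zpowers _)
      intro u hu c
      obtain ⟨m, rfl⟩ := Subgroup.mem_zpowers_iff.1 hu
      rw [← conj_zpow]
      exact Subgroup.zpow_mem _ (key c) m
    · refine Subgroup.isNilpotent_of_lowerCentralSeries_eq_bot (n := 1) ?_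
      have hc : IsMulCommutative (Subgroup.zpowers (q y)) := inferInstance
      exact Subgroup.commutator_self_eq_bot_iff.2 hc

/-- Without odd real elements, an involution gives a nontrivial normal 2-subgroup. -/
lemma exists_normal_two [Finite G] (hG : SqHyp G) (hr : NoReal G) {t : G} (ht : orderOf t = 2) :
    ∃ N : Subgroup G, N.Normal ∧ IsPGroup 2 N ∧ N ≠ ⊥ := by
  by_contra hno
  push Not at hno
  have ht1 : t ≠ 1 := by rintro rfl; simp at ht
  -- central 2-elements are trivial
  have hcen : ∀ u ∈ Subgroup.center G, ∀ k : ℕ, u ^ 2 ^ k = 1 → u = 1 := by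
    intro u hu k hk
    have := hno (Subgroup.zpowers u) ⟨?_⟩ ?_
    · exact Subgroup.zpowers_eq_bot.1 this
    · intro n hn c
      have hnc : n ∈ Subgroup.center G := (Subgroup.zpowers_le.2 hu) hn
      rw [Subgroup.mem_center_iff.1 hnc c, mul_inv_cancel_right]
      exact hn
    · rw [isPGroup_iff_pow_pow_eq_one]
      rintro ⟨n, hn⟩
      refine ⟨k, Subtype.ext ?_⟩
      obtain ⟨m, rfl⟩ := Subgroup.mem_zpowers_iff.1 hn
      simp only [Subgroup.coe_pow, Subgroup.coe_one]
      rw [← zpow_natCast, zpow_comm, zpow_natCast, hk, one_zpow]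
  have hinv : ∀ {a}, IsConj t a → a * a = 1 := by
    intro a ha
    have h1 : t ^ 2 = 1 := by rw [← ht]; exact pow_orderOf_eq_one t
    have := isConj_pow ha 2
    rw [h1] at this
    rw [← sq]; exact isConj_one_right.1 this
  -- products of two conjugates are 2-elements
  have htwo : ∀ {a b}, IsConj t a → IsConj t b → ∃ k, orderOf (a * b) = 2 ^ k := by
    intro a b ha hb
    obtain ⟨k, m, hm, hkm⟩ := Nat.exists_eq_two_pow_mul_odd (orderOf_pos (a * b)).ne'
    have ha' := inv_eq_of_mul_eq_one_left (hinv ha)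
    have hb' := inv_eq_of_mul_eq_one_left (hinv hb)
    have h1 : Odd (orderOf ((a * b) ^ 2 ^ k)) := by
      have : orderOf ((a * b) ^ 2 ^ k) ∣ m := by
        rw [orderOf_dvd_iff_pow_eq_one, ← pow_mul, ← hkm, pow_orderOf_eq_one]
      exact hm.of_dvd_nat this
    have h2 := hr _ a h1 (by
      rw [← conj_pow, ← inv_pow]
      congr 1
      rw [mul_inv_rev, hb', ha', ← mul_assoc, hinv ha, one_mul])
    have := orderOf_dvd_of_pow_eq_one h2
    obtain ⟨j, -, hj⟩ := (Nat.dvd_prime_pow Nat.prime_two).1 this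
    exact ⟨j, hj⟩
  have hcomm : ∀ {a b}, IsConj t a → IsConj t b → a * b = b * a := by
    intro a b ha hb
    have ha' := inv_eq_of_mul_eq_one_left (hinv ha)
    have hb' := inv_eq_of_mul_eq_one_left (hinv hb)
    suffices h : (a * b) * (a * b) = 1 by
      have := inv_eq_of_mul_eq_one_left h
      rw [← this, mul_inv_rev, ha', hb']
    obtain ⟨k, hk⟩ := htwo ha hb
    by_cases hu : a * b = 1
    · rw [hu, one_mul]
    have hbab : IsConj t (b * a * b) := by
      have := ha.trans (isConj_conj a b)
      rwa [hb'] at this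
    have e : (a * b) * (a * b) = a * (b * a * b) := by group
    rw [e]
    obtain ⟨j, hj⟩ := htwo ha hbab
    rcases hG t a b a (b * a * b) ha hb ha hbab with h | h | h
    · exact absurd (hcen _ h k (by rw [← hk, pow_orderOf_eq_one])) hu
    · exact hcen _ h j (by rw [← hj, pow_orderOf_eq_one])
    · exfalso
      obtain ⟨c, hc⟩ := isConj_iff.1 h
      have h2 : orderOf (a * b) = orderOf ((a * b) ^ 2) := by
        rw [sq, e, ← hc]
        have := MulEquiv.orderOf_eq (MulAut.conj c) (a * b)
        rw [MulAut.conj_apply] at this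
        exact this.symm
      have hk0 : k ≠ 0 := by
        rintro rfl
        exact hu (orderOf_eq_one_iff.1 (by simpa using hk))
      have hd : 2 ∣ orderOf (a * b) := by rw [hk]; exact dvd_pow_self 2 hk0
      rw [orderOf_pow_of_dvd two_ne_zero hd] at h2
      have := Nat.div_lt_self (orderOf_pos (a * b)) one_lt_two
      omega
  have hcl := hno (Subgroup.normalClosure {t}) inferInstance ?_
  · exact ht1 (by
      have : t ∈ Subgroup.normalClosure {t} := Subgroup.subset_normalClosure rfl
      rw [hcl] at this
      simpa using this)
  · have hset : ∀ x, x ∈ Group.conjugatesOfSet {t} ↔ IsConj t x := by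
      intro x
      simp [Group.mem_conjugatesOfSet_iff]
    have hc : ∀ x ∈ Group.conjugatesOfSet {t}, ∀ y ∈ Group.conjugatesOfSet {t},
        x * y = y * x := by
      intro x hx y hy
      exact hcomm ((hset x).1 hx) ((hset y).1 hy)
    have hcc : ∀ x ∈ Subgroup.normalClosure {t}, ∀ y ∈ Subgroup.normalClosure {t},
        x * y = y * x := by
      intro x hx y hy
      have := (Subgroup.isMulCommutative_closure hc).is_comm.comm ⟨x, hx⟩ ⟨y, hy⟩
      exact congrArg Subtype.val this
    have hsq : ∀ x ∈ Subgroup.normalClosure {t}, x * x = 1 := by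
      intro x hx
      induction hx using Subgroup.closure_induction with
      | mem x hx => exact hinv ((hset x).1 hx)
      | one => exact one_mul 1
      | mul x y hx hy h1 h2 =>
        have := hcc x hx y hy
        calc x * y * (x * y) = x * (y * x) * y := by group
          _ = (x * x) * (y * y) := by rw [← this]; group
          _ = 1 := by rw [h1, h2, one_mul]
      | inv x hx h => rw [← mul_inv_rev, h, inv_one]
    rw [isPGroup_iff_pow_pow_eq_one]
    rintro ⟨n, hn⟩
    refine ⟨1, Subtype.ext ?_⟩
    simp only [pow_one, Subgroup.coe_pow, Subgroup.coe_one]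
    rw [sq]; exact hsq n hn

lemma odd_noReal [Finite G] (ho : Odd (Nat.card G)) : NoReal G := by
  intro y g hy hyg
  have hg : Odd (orderOf g) := ho.of_dvd_nat (orderOf_dvd_natCard g)
  have h1 : g ^ 2 ∈ Subgroup.centralizer {y} := by
    rw [Subgroup.mem_centralizer_singleton_iff]
    have h2 : g * (g * y * g⁻¹) * g⁻¹ = y := by
      rw [hyg]
      have := congrArg (·⁻¹) hyg
      simpa [mul_assoc] using this
    calc g ^ 2 * y = g * (g * y * g⁻¹) * g⁻¹ * g ^ 2 := by rw [sq]; simp [mul_assoc]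
      _ = y * g ^ 2 := by rw [h2]
  have h3 := odd_mem hg h1
  rw [Subgroup.mem_centralizer_singleton_iff] at h3
  rw [h3, mul_inv_cancel_right] at hyg
  apply odd_eq_one hy
  rw [sq]
  nth_rewrite 1 [hyg]
  exact inv_mul_cancel y

/-- In an odd order group with the hypothesis, the centre is nontrivial. -/
lemma odd_center [Finite G] [Nontrivial G] (hG : SqHyp G) (ho : Odd (Nat.card G)) :
    Subgroup.center G ≠ ⊥ := by
  have hr := odd_noReal ho
  have hodd : ∀ x : G, Odd (orderOf x) := fun x => ho.of_dvd_nat (orderOf_dvd_natCard x)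
  obtain ⟨x, hx1, hmin⟩ := Set.exists_min_image {x : G | x ≠ 1}
    (fun x => Nat.card (Subgroup.normalClosure {x})) (Set.toFinite _) (exists_ne (1 : G))
  suffices hx : x ∈ Subgroup.center G by
    intro h
    rw [h] at hx
    exact hx1 (by simpa using hx)
  by_contra hxz
  have hx2 : x ^ 2 ∉ Subgroup.center G := fun h => hxz (odd_mem (hodd x) h)
  -- K² is the class of x²
  have hnc : ∀ {a b}, IsConj x a → IsConj x b → a * b ∉ Subgroup.center G := by
    intro a b ha hb hab
    have hac : IsConj a b := ha.symm.trans hb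
    obtain ⟨g, rfl⟩ := isConj_iff.1 hac
    obtain ⟨h1, h2⟩ := real_of_central (hodd a) hab
    have h3 := hr _ _ h1 h2
    rw [mul_inv_eq_one] at h3
    rw [← h3] at hab
    exact hx2 (center_conj (isConj_pow ha.symm 2) hab)
  have hKK : ∀ {a b}, IsConj x a → IsConj x b → IsConj (x ^ 2) (a * b) := by
    intro a b ha hb
    rcases hG x x x a b (.refl _) (.refl _) ha hb with h | h | h
    · rw [← sq] at h; exact absurd h hx2
    · exact absurd h (hnc ha hb)
    · rwa [← sq] at h
  let K : Set G := {a | IsConj x a}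
  let D : Set G := {a | IsConj (x ^ 2) a}
  have hDK : D.ncard ≤ K.ncard := by
    have : D ⊆ (fun a => a ^ 2) '' K := by
      intro d hd
      obtain ⟨g, rfl⟩ := isConj_iff.1 hd
      exact ⟨g * x * g⁻¹, isConj_conj _ _, conj_pow⟩
    exact (Set.ncard_le_ncard this (Set.toFinite _)).trans (Set.ncard_image_le (Set.toFinite _))
  have hmulK : ∀ {a}, IsConj x a → (fun k => a * k) '' K = D := by
    intro a ha
    refine Set.eq_of_subset_of_ncard_le ?_ ?_ (Set.toFinite _)
    · rintro _ ⟨k, hk, rfl⟩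
      exact hKK ha hk
    · rw [Set.ncard_image_of_injective _ (mul_right_injective a)]
      exact hDK
  -- the stabilizer of K under left multiplication
  let S : Subgroup G := MulAction.stabilizer G K
  have hS : ∀ s, s ∈ S ↔ (fun k => s * k) '' K = K := fun s => Iff.rfl
  have hSK : ∀ {s k}, s ∈ S → IsConj x k → IsConj x (s * k) := by
    intro s k hs hk
    have : s * k ∈ (fun k => s * k) '' K := ⟨k, hk, rfl⟩
    rw [(hS s).1 hs] at this
    exact this
  have hSmem : ∀ s, (∀ k, IsConj x k → IsConj x (s * k)) → s ∈ S := by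
    intro s hs
    rw [hS]
    refine Set.eq_of_subset_of_ncard_le ?_ ?_ (Set.toFinite _)
    · rintro _ ⟨k, hk, rfl⟩
      exact hs k hk
    · rw [Set.ncard_image_of_injective _ (mul_right_injective s)]
  have hSn : S.Normal := by
    refine ⟨fun s hs g => hSmem _ fun k hk => ?_⟩
    have h1 : IsConj x (g⁻¹ * k * g) := by
      have := hk.trans (isConj_conj k g⁻¹)
      rwa [inv_inv] at this
    have h2 := (hSK hs h1).trans (isConj_conj _ g)
    have e : g * (s * (g⁻¹ * k * g)) * g⁻¹ = g * s * g⁻¹ * k := by group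
    rwa [e] at h2
  have hxS : x ∉ S := by
    intro h
    have := hSK (S.inv_mem h) (.refl x)
    rw [inv_mul_cancel] at this
    exact hx1 (isConj_one_right.1 this.symm)
  obtain ⟨g, hg⟩ : ∃ g, g * x * g⁻¹ ≠ x := by
    by_contra hcon
    push Not at hcon
    apply hxz
    rw [Subgroup.mem_center_iff]
    intro g
    exact mul_inv_eq_iff_eq_mul.1 (hcon g)
  set s := x⁻¹ * (g * x * g⁻¹) with hs
  have hsS : s ∈ S := by
    apply hSmem
    intro k hk
    have h1 : (g * x * g⁻¹) * k ∈ (fun k => (g * x * g⁻¹) * k) '' K := ⟨k, hk, rfl⟩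
    rw [hmulK (isConj_conj _ _), ← hmulK (.refl x)] at h1
    obtain ⟨k', hk', e⟩ := h1
    have : s * k = k' := by
      rw [hs, mul_assoc, ← e]; group
    rw [this]; exact hk'
  have hs1 : s ≠ 1 := by
    rw [hs, Ne, inv_mul_eq_one]
    exact fun h => hg h.symm
  have hxN : x ∈ Subgroup.normalClosure {x} := Subgroup.subset_normalClosure rfl
  have hsN : Subgroup.normalClosure {s} ≤ Subgroup.normalClosure {x} := by
    apply Subgroup.normalClosure_le_normal
    rw [Set.singleton_subset_iff]
    exact mul_mem (inv_mem hxN) (Subgroup.normalClosure_normal.conj_mem _ hxN _)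
  have hsN' : Subgroup.normalClosure {s} ≤ S := by
    apply Subgroup.normalClosure_le_normal
    rwa [Set.singleton_subset_iff]
  have heq := Subgroup.eq_of_le_of_card_ge hsN (hmin s hs1)
  exact hxS (hsN' (heq ▸ hxN))

lemma odd_nilpotent (n : ℕ) : ∀ (G : Type u) [Group G] [Finite G], Nat.card G = n → SqHyp G →
    Odd (Nat.card G) → Group.IsNilpotent G := by
  induction n using Nat.strong_induction_on with
  | _ n ih =>
    intro G _ _ hn hG ho
    rcases subsingleton_or_nontrivial G with h | h
    · infer_instance
    have hz := odd_center hG ho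
    refine Group.of_quotient_center_nilpotent ?_
    have hmul := Subgroup.card_eq_card_quotient_mul_card_subgroup (Subgroup.center G)
    have hlt : 1 < Nat.card (Subgroup.center G) := by
      exact (Subgroup.one_lt_card_iff_ne_bot _).2 hz
    refine ih (Nat.card (G ⧸ Subgroup.center G)) ?_ _ rfl
      (hG.map _ (QuotientGroup.mk'_surjective _)) ?_
    · rw [← hn, hmul]
      exact lt_mul_of_one_lt_right Nat.card_pos hlt
    · exact ho.of_dvd_nat ⟨_, hmul⟩

lemma exists_max_two (G : Type*) [Group G] [Finite G] : ∃ P : Subgroup G, P.Normal ∧ IsPGroup 2 P ∧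
    ∀ N : Subgroup G, N.Normal → IsPGroup 2 N → P ≤ N → N = P := by
  obtain ⟨F, hF⟩ := Set.Finite.exists_maximal
    (Set.toFinite {N : Subgroup G | N.Normal ∧ IsPGroup 2 N})
    ⟨⊥, inferInstance, IsPGroup.of_bot⟩
  obtain ⟨⟨h1, h2⟩, h3⟩ := hF
  exact ⟨F, h1, h2, fun N hN hN' hle => le_antisymm (h3 ⟨hN, hN'⟩ hle) hle⟩

lemma two_step [Finite G] (hG : SqHyp G) (hr : NoReal G) :
    ∃ P : Subgroup G, ∃ _ : P.Normal, IsPGroup 2 P ∧ Group.IsNilpotent (G ⧸ P) := by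
  obtain ⟨P, hP, hP2, hmax⟩ := exists_max_two G
  refine ⟨P, hP, hP2, ?_⟩
  have hs := QuotientGroup.mk'_surjective P
  have hG' : SqHyp (G ⧸ P) := hG.map _ hs
  have hr' : NoReal (G ⧸ P) := NoReal.map hG (QuotientGroup.mk' P) hs (fun y g h1 h2 => by
    rw [hr y g h1 h2, map_one])
  refine odd_nilpotent _ _ rfl hG' ?_
  by_contra hodd
  rw [Nat.not_odd_iff_even, even_iff_two_dvd] at hodd
  obtain ⟨t, ht⟩ := exists_prime_orderOf_dvd_card' 2 hodd
  obtain ⟨N, hN, hN2, hNb⟩ := exists_normal_two hG' hr' ht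
  apply hNb
  have hle : P ≤ N.comap (QuotientGroup.mk' P) := by
    intro p hp
    have : QuotientGroup.mk' P p = 1 := (QuotientGroup.eq_one_iff p).2 hp
    rw [Subgroup.mem_comap, this]
    exact one_mem _
  have := hmax (N.comap (QuotientGroup.mk' P)) inferInstance
    (hN2.comap_of_ker_isPGroup _ (by rw [QuotientGroup.ker_mk']; exact hP2)) hle
  rw [eq_bot_iff]
  intro u hu
  obtain ⟨u, rfl⟩ := hs u
  have h1 : u ∈ P := this ▸ hu
  exact (QuotientGroup.eq_one_iff u).2 h1

end main

lemma mem_conjClass_iff {G : Type*} [Group G] {x a : G} : a ∈ conjClass x ↔ IsConj x a := by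
  rw [isConj_iff]
  constructor
  · rintro ⟨g, rfl⟩
    exact ⟨g⁻¹, by group⟩
  · rintro ⟨g, rfl⟩
    exact ⟨g⁻¹, by group⟩

/-- **Corollary F.** If every conjugacy class `K` of a finite group `G` satisfies that `K²`
is a union of conjugacy classes all of which are central except at most one, then there are
normal subgroups `N ≤ M` of `G` with `N` nilpotent, `M/N` a 2-group, and `G/M` nilpotent;
in particular `G` is solvable (of Fitting length at most 3). -/
theorem all_squares_union_central_classes
    {G : Type*} [Group G] [Fintype G]
    (h : ∀ x : G, ∃ d : G,
      conjClass x * conjClass x ⊆ (Subgroup.center G : Set G) ∪ conjClass d) :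
    ∃ (N M : Subgroup G) (_ : N.Normal) (_ : M.Normal), N ≤ M ∧
      Group.IsNilpotent N ∧
      IsPGroup 2 (M ⧸ N.subgroupOf M) ∧
      Group.IsNilpotent (G ⧸ M) ∧
      IsSolvable G := by
  have hG : SqHyp G := by
    intro x a b c e ha hb hc he
    obtain ⟨d, hd⟩ := h x
    have h1 := hd (Set.mul_mem_mul (mem_conjClass_iff.2 ha) (mem_conjClass_iff.2 hb))
    have h2 := hd (Set.mul_mem_mul (mem_conjClass_iff.2 hc) (mem_conjClass_iff.2 he))
    rcases h1 with h1 | h1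
    · exact .inl h1
    rcases h2 with h2 | h2
    · exact .inr (.inl h2)
    exact .inr (.inr ((mem_conjClass_iff.1 h1).symm.trans (mem_conjClass_iff.1 h2)))
  obtain ⟨F, hF, hFn, hFmax⟩ := exists_fitting G
  have hs := QuotientGroup.mk'_surjective F
  have hr : NoReal (G ⧸ F) := NoReal.map hG (QuotientGroup.mk' F) hs (fun y g h1 h2 => by
    obtain ⟨N, hN, hNn, hy⟩ := real_mem_nilpotent hG h1 h2
    exact (QuotientGroup.eq_one_iff y).2 (hFmax N hN hNn hy))
  obtain ⟨P, hP, hP2, hPn⟩ := two_step (hG.map _ hs) hr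
  have hFM : F ≤ P.comap (QuotientGroup.mk' F) := by
    intro p hp
    have : QuotientGroup.mk' F p = 1 := (QuotientGroup.eq_one_iff p).2 hp
    rw [Subgroup.mem_comap, this]
    exact one_mem _
  have hMn : Group.IsNilpotent (G ⧸ P.comap (QuotientGroup.mk' F)) := by
    refine Subgroup.isNilpotent_of_ker_le_center (QuotientGroup.map (P.comap (QuotientGroup.mk' F)) P
      (QuotientGroup.mk' F) le_rfl) ?_
    rintro u hu
    obtain ⟨u, rfl⟩ := QuotientGroup.mk'_surjective _ u
    have h1 : QuotientGroup.mk' F u ∈ P := (QuotientGroup.eq_one_iff _).1 hu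
    have h2 : QuotientGroup.mk' (P.comap (QuotientGroup.mk' F)) u = 1 :=
      (QuotientGroup.eq_one_iff _).2 h1
    rw [h2]
    exact one_mem _
  refine ⟨F, P.comap (QuotientGroup.mk' F), hF, inferInstance, hFM, hFn, ?_, hMn, ?_⟩
  · rw [isPGroup_iff_pow_pow_eq_one] at hP2 ⊢
    intro u
    obtain ⟨⟨m, hm⟩, rfl⟩ := QuotientGroup.mk'_surjective _ u
    obtain ⟨k, hk⟩ := hP2 ⟨QuotientGroup.mk' F m, hm⟩
    refine ⟨k, ?_⟩
    have h1 : QuotientGroup.mk' F (m ^ 2 ^ k) = 1 := by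
      have := congrArg Subtype.val hk
      simpa using this
    rw [← map_pow]
    exact (QuotientGroup.eq_one_iff _).2 (Subgroup.mem_subgroupOf.2 ((QuotientGroup.eq_one_iff _).1 h1))
  · have := hPn
    have hPnil : Group.IsNilpotent P := hP2.isNilpotent
    have h1 : IsSolvable (G ⧸ F) := (Group.isSolvable_iff_subgroup_quotient P).2
      ⟨inferInstance, inferInstance⟩
    exact (Group.isSolvable_iff_subgroup_quotient F).2 ⟨inferInstance, h1⟩
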